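/- arXiv:1711.00756 — 3 statements merged into one kernel-verified Lean document; each statement's English description precedes it below -/
import Mathlib

section
/- Let k be a field. For a formal Laurent series f = Σ_{n ≤ N} c_n t^n ∈ k((t^{-1})), define the k-linear operator φ(f) : k[t] → k[t] on monomials by φ(f)(t^m) = Σ_{n = −m}^{N} c_n t^{m+n} (i.e., multiply by f and discard all terms of negative degree). Then the image of the commutator [φ(f), R_t] is contained in the one-dimensional subspace of constants k·1 ⊆ k[t]; in particular [φ(f), R_t] has rank at most 1, and φ(f) belongs to E(k[t]). -/
/-!
On a monomial, `φ(f)(t^(m+1))` has at most one term more than `t · φ(f)(t^m)`: the one with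
`n = -(m+1)`, which is the constant `c (-(m+1))`. Hence `[φ(f), R_t]` maps every monomial, and by
linearity every polynomial, to a constant (`phiOp_comm_X_monomial`). For a general `a`, the
derivation identity `[φ, R_{pq}] = [φ, R_p] R_q + R_p [φ, R_q]` and `[φ, R_C] = 0` for constants
propagate finite rank from `t` to all of `k[t]` by induction on polynomials
(`finite_range_comm_mul`).
-/

/-- Given the coefficients `c : ℤ → k` of a formal Laurent series
`f = ∑_{n ≤ N} c n • t^n ∈ k((t⁻¹))`, the `k`-linear operator `φ(f) : k[t] → k[t]`
defined on monomials by `φ(f)(t^m) = ∑_{n = -m}^{N} c n • t^{m+n}` (multiply by `f` and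
discard all terms of negative degree). -/
noncomputable def phiOp (k : Type*) [Field k] (c : ℤ → k) (N : ℤ) :
    Polynomial k →ₗ[k] Polynomial k :=
  (Polynomial.basisMonomials k).constr k fun m =>
    ∑ n ∈ Finset.Icc (-(m : ℤ)) N, c n • (Polynomial.X : Polynomial k) ^ ((m : ℤ) + n).toNat

lemma phiOp_X_pow (k : Type*) [Field k] (c : ℤ → k) (N : ℤ) (m : ℕ) :
    phiOp k c N (Polynomial.X ^ m) =
      ∑ n ∈ Finset.Icc (-(m : ℤ)) N,
        c n • (Polynomial.X : Polynomial k) ^ ((m : ℤ) + n).toNat := by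
  have h := (Polynomial.basisMonomials k).constr_basis k (fun m : ℕ =>
    ∑ n ∈ Finset.Icc (-(m : ℤ)) N, c n • (Polynomial.X : Polynomial k) ^ ((m : ℤ) + n).toNat) m
  rw [Polynomial.coe_basisMonomials] at h
  rw [Polynomial.X_pow_eq_monomial]
  exact h

lemma phiOp_comm_X_monomial (k : Type*) [Field k] (c : ℤ → k) (N : ℤ)
    (hc : ∀ n : ℤ, N < n → c n = 0) (m : ℕ) :
    phiOp k c N (Polynomial.X ^ (m + 1)) - phiOp k c N (Polynomial.X ^ m) * Polynomial.X
      = c (-((m : ℤ) + 1)) • (1 : Polynomial k) := by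
  rw [phiOp_X_pow, phiOp_X_pow, Finset.sum_mul]
  have h2 : ∀ n ∈ Finset.Icc (-(m : ℤ)) N,
      c n • (Polynomial.X : Polynomial k) ^ ((m : ℤ) + n).toNat * Polynomial.X
        = c n • (Polynomial.X : Polynomial k) ^ (((m + 1 : ℕ) : ℤ) + n).toNat := by
    intro n hn
    rw [Finset.mem_Icc] at hn
    rw [smul_mul_assoc, ← pow_succ]
    congr 2
    omega
  rw [Finset.sum_congr rfl h2]
  by_cases h : -((m : ℤ) + 1) ≤ N
  · have h3 : Finset.Icc (-((m + 1 : ℕ) : ℤ)) N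
        = insert (-((m : ℤ) + 1)) (Finset.Icc (-(m : ℤ)) N) := by
      ext x
      simp only [Finset.mem_insert, Finset.mem_Icc]
      omega
    rw [h3, Finset.sum_insert (by simp)]
    simp
  · -- Both sums are empty, and the coefficient on the right lies beyond the leading degree `N`.
    rw [hc _ (by omega), Finset.Icc_eq_empty (by omega), Finset.Icc_eq_empty (by omega)]
    simp

/-- The set of multipliers whose commutator with `φ` has finite rank is closed under products. -/
lemma finite_range_comm_mul {k : Type*} [Field k] (φ : Polynomial k →ₗ[k] Polynomial k)
    (p q : Polynomial k)
    (hp : FiniteDimensional k (LinearMap.range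
      (φ ∘ₗ LinearMap.mulRight k p - LinearMap.mulRight k p ∘ₗ φ)))
    (hq : FiniteDimensional k (LinearMap.range
      (φ ∘ₗ LinearMap.mulRight k q - LinearMap.mulRight k q ∘ₗ φ))) :
    FiniteDimensional k (LinearMap.range
      (φ ∘ₗ LinearMap.mulRight k (p * q) - LinearMap.mulRight k (p * q) ∘ₗ φ)) := by
  refine Submodule.finiteDimensional_of_le (S₂ :=
    LinearMap.range (φ ∘ₗ LinearMap.mulRight k p - LinearMap.mulRight k p ∘ₗ φ) ⊔
    (LinearMap.range (φ ∘ₗ LinearMap.mulRight k q - LinearMap.mulRight k q ∘ₗ φ)).map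
      (LinearMap.mulRight k p)) ?_
  rintro _ ⟨x, rfl⟩
  refine Submodule.mem_sup.2 ⟨_, ⟨x * q, rfl⟩, _, ⟨_, ⟨x, rfl⟩, rfl⟩, ?_⟩
  simp only [LinearMap.sub_apply, LinearMap.comp_apply, LinearMap.mulRight_apply]
  rw [mul_assoc x q p, mul_comm q p]
  ring

lemma finite_range_comm_add {k : Type*} [Field k] (φ : Polynomial k →ₗ[k] Polynomial k)
    (p q : Polynomial k)
    (hp : FiniteDimensional k (LinearMap.range
      (φ ∘ₗ LinearMap.mulRight k p - LinearMap.mulRight k p ∘ₗ φ)))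
    (hq : FiniteDimensional k (LinearMap.range
      (φ ∘ₗ LinearMap.mulRight k q - LinearMap.mulRight k q ∘ₗ φ))) :
    FiniteDimensional k (LinearMap.range
      (φ ∘ₗ LinearMap.mulRight k (p + q) - LinearMap.mulRight k (p + q) ∘ₗ φ)) := by
  refine Submodule.finiteDimensional_of_le (S₂ :=
    LinearMap.range (φ ∘ₗ LinearMap.mulRight k p - LinearMap.mulRight k p ∘ₗ φ) ⊔
    LinearMap.range (φ ∘ₗ LinearMap.mulRight k q - LinearMap.mulRight k q ∘ₗ φ)) ?_
  rintro _ ⟨x, rfl⟩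
  refine Submodule.mem_sup.2 ⟨_, ⟨x, rfl⟩, _, ⟨x, rfl⟩, ?_⟩
  simp only [LinearMap.sub_apply, LinearMap.comp_apply, LinearMap.mulRight_apply, mul_add, map_add]
  ring

lemma finite_range_comm_C {k : Type*} [Field k] (φ : Polynomial k →ₗ[k] Polynomial k) (r : k) :
    FiniteDimensional k (LinearMap.range
      (φ ∘ₗ LinearMap.mulRight k (Polynomial.C r)
        - LinearMap.mulRight k (Polynomial.C r) ∘ₗ φ)) := by
  have h : φ ∘ₗ LinearMap.mulRight k (Polynomial.C r)
      - LinearMap.mulRight k (Polynomial.C r) ∘ₗ φ = 0 := by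
    refine LinearMap.ext fun x => ?_
    simp only [LinearMap.sub_apply, LinearMap.comp_apply, LinearMap.mulRight_apply,
      LinearMap.zero_apply]
    rw [mul_comm x, mul_comm (φ x), ← Polynomial.smul_eq_C_mul, ← Polynomial.smul_eq_C_mul,
      map_smul, sub_self]
  rw [h, LinearMap.range_zero]
  infer_instance

/-- **Statement 3.** For a formal Laurent series `f = ∑_{n ≤ N} c_n t^n ∈ k((t⁻¹))`,
the image of the commutator `[φ(f), R_t]` is contained in the constants `k·1 ⊆ k[t]`;
in particular `[φ(f), R_t]` has rank at most `1`, and `φ(f) ∈ E(k[t])`, i.e.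
`[φ(f), R_a]` has finite rank for every `a ∈ k[t]`. -/
theorem phiOp_commutator (k : Type*) [Field k] (c : ℤ → k) (N : ℤ)
    (hc : ∀ n : ℤ, N < n → c n = 0) :
    (∀ p : Polynomial k,
      (phiOp k c N ∘ₗ LinearMap.mulRight k Polynomial.X
        - LinearMap.mulRight k Polynomial.X ∘ₗ phiOp k c N) p
        ∈ Submodule.span k {(1 : Polynomial k)}) ∧
    Module.rank k (LinearMap.range (phiOp k c N ∘ₗ LinearMap.mulRight k Polynomial.X
        - LinearMap.mulRight k Polynomial.X ∘ₗ phiOp k c N)) ≤ 1 ∧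
    (∀ a : Polynomial k, FiniteDimensional k
      (LinearMap.range (phiOp k c N ∘ₗ LinearMap.mulRight k a
        - LinearMap.mulRight k a ∘ₗ phiOp k c N))) := by
  have h1 : ∀ p : Polynomial k,
      (phiOp k c N ∘ₗ LinearMap.mulRight k Polynomial.X
        - LinearMap.mulRight k Polynomial.X ∘ₗ phiOp k c N) p
        ∈ Submodule.span k {(1 : Polynomial k)} := by
    intro p
    induction p using Polynomial.induction_on' with
    | add p q hp hq => rw [map_add]; exact Submodule.add_mem _ hp hq
    | monomial m r =>
      rw [← mul_one r, ← smul_eq_mul, ← Polynomial.smul_monomial, map_smul,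
        ← Polynomial.X_pow_eq_monomial]
      refine Submodule.smul_mem _ _ ?_
      simp only [LinearMap.sub_apply, LinearMap.comp_apply, LinearMap.mulRight_apply]
      rw [← pow_succ, phiOp_comm_X_monomial k c N hc]
      exact Submodule.smul_mem _ _ (Submodule.mem_span_singleton_self _)
  have h2 : LinearMap.range (phiOp k c N ∘ₗ LinearMap.mulRight k Polynomial.X
      - LinearMap.mulRight k Polynomial.X ∘ₗ phiOp k c N)
      ≤ Submodule.span k {(1 : Polynomial k)} := by
    rintro _ ⟨p, rfl⟩
    exact h1 p
  refine ⟨h1, ?_, fun a => ?_⟩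
  · refine (Submodule.rank_mono h2).trans ((rank_span_le _).trans ?_)
    simp
  · induction a using Polynomial.induction_on with
    | C r => exact finite_range_comm_C _ r
    | add p q hp hq => exact finite_range_comm_add _ p q hp hq
    | monomial n r h =>
      rw [pow_succ, ← mul_assoc]
      exact finite_range_comm_mul _ _ _ h (Submodule.finiteDimensional_of_le h2)
end

section
/- Let k be a field, μ : ℤ → k a function with μ_j = 0 for all j ≥ 0. Let V be the k-vector space with basis {e_{i,j} : i, j ∈ ℕ}, and define Φ_x, Φ_y : V → V by Φ_x(e_{i,j}) = e_{i+1,j} − Σ_{l=1}^{j} λ_{i+1,l} e_{0,j−l} and Φ_y(e_{i,j}) = e_{i,j+1}, where λ_{1,l} := −μ_{−l} and λ_{i,l} := 0 for i ≥ 2. Let W be the k-vector space with basis {e_i : i ∈ ℕ}, and define Ψ_x, Ψ_y : W → W by Ψ_x(e_i) = Σ_{j=−i}^{−1} μ_j e_{i+j} and Ψ_y(e_i) = e_{i+1}. Define k-linear maps ι : k[x,y] → V by ι(x^p y^q) = e_{p+1,q}, and π : V → W by π(e_{0,j}) = e_j and π(e_{i,j}) = 0 for i ≥ 1. Then: (a)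 0 → k[x,y] →^ι V →^π W → 0 is a short exact sequence of k-vector spaces (ι injective, π surjective, ker π = range ι); (b) ι intertwines the multiplication operators by x and by y on k[x,y] with Φ_x and Φ_y respectively, i.e., Φ_x∘ι = ι∘M_x and Φ_y∘ι = ι∘M_y; (c) π intertwines Φ_x with Ψ_x and Φ_y with Ψ_y, i.e., π∘Φ_x = Ψ_x∘π and π∘Φ_y = Ψ_y∘π. -/
/-!
The sequence is split: `iotaRetraction` (forget the `e_{0,j}` and send `e_{i+1,j}` to `x^i y^j`) and
`piSection` (`e_j ↦ e_{0,j}`) satisfy `ρ ∘ ι = id`, `π ∘ σ = id`, `π ∘ ι = 0` and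
`ι ∘ ρ + σ ∘ π = id`, from which exactness is formal. All the identities, as well as the
intertwining relations, are checked on basis vectors. On the image of `ι` the correction terms of
`Φ_x` vanish, since `λ_{i,l} = 0` for `i ≥ 2`; on `e_{0,j}` they become, after applying `π`,
the sum `∑ μ_{-l} e_{j-l}` over `1 ≤ l ≤ j`, which is `Ψ_x(e_j)` reindexed by `m = -l`.
-/

noncomputable section

variable (k : Type*) [Field k]

/-- The `k`-vector space with basis `{e_{i,j} : i, j ∈ ℕ}`. -/
abbrev Vplane := (ℕ × ℕ) →₀ k

/-- The basis vector `e_{i,j}`. -/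
def ee (i j : ℕ) : Vplane k := Finsupp.single (i, j) 1

/-- The `k`-vector space with basis `{e_i : i ∈ ℕ}`. -/
abbrev Wline := ℕ →₀ k

/-- The basis vector `e_i`. -/
def ew (i : ℕ) : Wline k := Finsupp.single i 1

variable (mu : ℤ → k)

/-- `λ_{i,l}`, defined by `λ_{1,l} = −μ_{−l}` and `λ_{i,l} = 0` for `i ≥ 2`. -/
def lam (i l : ℕ) : k := if i = 1 then -mu (-(l : ℤ)) else 0

/-- `Φ_x(e_{i,j}) = e_{i+1,j} − ∑_{l=1}^{j} λ_{i+1,l} e_{0,j−l}`. -/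
def PhiX : Module.End k (Vplane k) :=
  Finsupp.lift (Vplane k) k (ℕ × ℕ) fun p =>
    ee k (p.1 + 1) p.2 - ∑ l ∈ Finset.Icc 1 p.2, lam k mu (p.1 + 1) l • ee k 0 (p.2 - l)

/-- `Φ_y(e_{i,j}) = e_{i,j+1}`. -/
def PhiY : Module.End k (Vplane k) :=
  Finsupp.lift (Vplane k) k (ℕ × ℕ) fun p => ee k p.1 (p.2 + 1)

/-- `Ψ_x(e_i) = ∑_{j=−i}^{−1} μ_j e_{i+j}`. -/
def PsiX : Module.End k (Wline k) :=
  Finsupp.lift (Wline k) k ℕ fun i =>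
    ∑ j ∈ Finset.Icc (-(i : ℤ)) (-1 : ℤ), mu j • ew k ((i : ℤ) + j).toNat

/-- `Ψ_y(e_i) = e_{i+1}`. -/
def PsiY : Module.End k (Wline k) :=
  Finsupp.lift (Wline k) k ℕ fun i => ew k (i + 1)

/-- The `k`-linear map `ι : k[x,y] → V`, `ι(x^p y^q) = e_{p+1,q}`. -/
def iota : MvPolynomial (Fin 2) k →ₗ[k] Vplane k :=
  (MvPolynomial.basisMonomials (Fin 2) k).constr k fun d => ee k (d 0 + 1) (d 1)

/-- The `k`-linear map `π : V → W`, `π(e_{0,j}) = e_j` and `π(e_{i,j}) = 0` for `i ≥ 1`. -/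
def piMap : Vplane k →ₗ[k] Wline k :=
  Finsupp.lift (Wline k) k (ℕ × ℕ) fun p => if p.1 = 0 then ew k p.2 else 0

@[simp] lemma PhiX_single (p : ℕ × ℕ) : PhiX k mu (Finsupp.single p 1) =
    ee k (p.1 + 1) p.2 - ∑ l ∈ Finset.Icc 1 p.2, lam k mu (p.1 + 1) l • ee k 0 (p.2 - l) := by
  simp [PhiX]

@[simp] lemma PhiY_single (p : ℕ × ℕ) :
    PhiY k (Finsupp.single p 1) = ee k p.1 (p.2 + 1) := by
  simp [PhiY]

@[simp] lemma PsiX_single (i : ℕ) : PsiX k mu (Finsupp.single i 1) =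
    ∑ j ∈ Finset.Icc (-(i : ℤ)) (-1 : ℤ), mu j • ew k ((i : ℤ) + j).toNat := by
  simp [PsiX]

@[simp] lemma PsiY_single (i : ℕ) : PsiY k (Finsupp.single i 1) = ew k (i + 1) := by
  simp [PsiY]

@[simp] lemma iota_monomial (d : Fin 2 →₀ ℕ) :
    iota k (MvPolynomial.monomial d 1) = ee k (d 0 + 1) (d 1) := by
  have h := (MvPolynomial.basisMonomials (Fin 2) k).constr_basis k
    (fun d => ee k (d 0 + 1) (d 1)) d
  rwa [MvPolynomial.coe_basisMonomials] at h

@[simp] lemma piMap_single (p : ℕ × ℕ) :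
    piMap k (Finsupp.single p 1) = if p.1 = 0 then ew k p.2 else 0 := by
  simp [piMap]

/-- The retraction `V → k[x,y]` of `ι` given by `e_{0,j} ↦ 0` and `e_{i+1,j} ↦ x^i y^j`. The
exponent of `x` is written with truncated subtraction, which is harmless as it is used only for
positive first index. -/
def iotaRetraction : Vplane k →ₗ[k] MvPolynomial (Fin 2) k :=
  Finsupp.lift (MvPolynomial (Fin 2) k) k (ℕ × ℕ) fun p =>
    if p.1 = 0 then 0
    else MvPolynomial.monomial (Finsupp.single 0 (p.1 - 1) + Finsupp.single 1 p.2) 1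

/-- The section `W → V` of `π` given by `e_j ↦ e_{0,j}`. -/
def piSection : Wline k →ₗ[k] Vplane k :=
  Finsupp.lift (Vplane k) k ℕ fun j => ee k 0 j

lemma iotaRetraction_iota : iotaRetraction k ∘ₗ iota k = LinearMap.id := by
  refine (MvPolynomial.basisMonomials (Fin 2) k).ext fun d => ?_
  have hd : (Finsupp.single 0 (d 0) + Finsupp.single 1 (d 1) : Fin 2 →₀ ℕ) = d := by
    ext a; fin_cases a <;> simp
  simp [iotaRetraction, ee, hd]

lemma piMap_piSection : piMap k ∘ₗ piSection k = LinearMap.id := by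
  refine Finsupp.lhom_ext' fun i => LinearMap.ext_ring ?_
  simp [piSection, ee, ew]

lemma piMap_iota : piMap k ∘ₗ iota k = 0 := by
  refine (MvPolynomial.basisMonomials (Fin 2) k).ext fun d => ?_
  simp [ee]

lemma iota_iotaRetraction_add :
    iota k ∘ₗ iotaRetraction k + piSection k ∘ₗ piMap k = LinearMap.id := by
  refine Finsupp.lhom_ext' fun ⟨i, j⟩ => LinearMap.ext_ring ?_
  rcases i with _ | i <;> simp [iotaRetraction, piSection, ee, ew]

lemma PhiX_comp_iota : (PhiX k mu).comp (iota k)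
    = (iota k).comp (LinearMap.mulLeft k (MvPolynomial.X 0)) := by
  refine (MvPolynomial.basisMonomials (Fin 2) k).ext fun d => ?_
  simp [ee, MvPolynomial.X, MvPolynomial.monomial_mul, lam, add_comm]

lemma PhiY_comp_iota : (PhiY k).comp (iota k)
    = (iota k).comp (LinearMap.mulLeft k (MvPolynomial.X 1)) := by
  refine (MvPolynomial.basisMonomials (Fin 2) k).ext fun d => ?_
  simp [ee, MvPolynomial.X, MvPolynomial.monomial_mul, add_comm]

/-- The sum defining `Ψ_x(e_j)`, reindexed by the positive integer `l = -m`. -/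
lemma sum_Icc_neg (j : ℕ) :
    ∑ l ∈ Finset.Icc 1 j, mu (-(l : ℤ)) • ew k (j - l) =
      ∑ m ∈ Finset.Icc (-(j : ℤ)) (-1 : ℤ), mu m • ew k ((j : ℤ) + m).toNat := by
  refine Finset.sum_bij (fun l _ => -(l : ℤ)) ?_ ?_ ?_ ?_
  · intro l hl
    simp only [Finset.mem_Icc] at hl ⊢
    omega
  · intro a _ b _ h
    simpa using h
  · intro m hm
    simp only [Finset.mem_Icc] at hm
    exact ⟨(-m).toNat, by simp only [Finset.mem_Icc]; omega, by omega⟩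
  · intro l _
    congr 2
    omega

lemma piMap_comp_PhiX : (piMap k).comp (PhiX k mu) = (PsiX k mu).comp (piMap k) := by
  refine Finsupp.lhom_ext' fun ⟨i, j⟩ => LinearMap.ext_ring ?_
  rcases i with _ | i
  · have h (n : ℕ) : piMap k (ee k 0 n) = ew k n := by simp [ee]
    have h1 : piMap k (ee k 1 j) = 0 := by simp [ee]
    simp only [LinearMap.comp_apply, Finsupp.lsingle_apply, PhiX_single, piMap_single, if_true,
      map_sub, map_neg, map_sum, map_smul, zero_add, h, h1, lam, neg_smul,
      Finset.sum_neg_distrib, zero_sub, neg_neg]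
    exact (sum_Icc_neg k mu j).trans (PsiX_single k mu j).symm
  · simp [ee, lam]

lemma piMap_comp_PhiY : (piMap k).comp (PhiY k) = (PsiY k).comp (piMap k) := by
  refine Finsupp.lhom_ext' fun ⟨i, j⟩ => LinearMap.ext_ring ?_
  rcases i with _ | i <;> simp [ee, ew]

/-- **Statement 10.** `0 → k[x,y] → V → W → 0` is a short exact sequence of
`k`-vector spaces, `ι` intertwines multiplication by `x`, `y` with `Φ_x`, `Φ_y`, and
`π` intertwines `Φ_x`, `Φ_y` with `Ψ_x`, `Ψ_y`. -/
theorem short_exact_sequence_almost_modules (hmu : ∀ j : ℤ, 0 ≤ j → mu j = 0) :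
    (Function.Injective (iota k) ∧ Function.Surjective (piMap k) ∧
      LinearMap.ker (piMap k) = LinearMap.range (iota k)) ∧
    ((PhiX k mu).comp (iota k)
        = (iota k).comp (LinearMap.mulLeft k (MvPolynomial.X 0)) ∧
      (PhiY k).comp (iota k)
        = (iota k).comp (LinearMap.mulLeft k (MvPolynomial.X 1))) ∧
    ((piMap k).comp (PhiX k mu) = (PsiX k mu).comp (piMap k) ∧
      (piMap k).comp (PhiY k) = (PsiY k).comp (piMap k)) := by
  refine ⟨⟨?_, ?_, ?_⟩, ⟨PhiX_comp_iota k mu, PhiY_comp_iota k⟩,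
    piMap_comp_PhiX k mu, piMap_comp_PhiY k⟩
  · exact Function.LeftInverse.injective (g := iotaRetraction k)
      (LinearMap.congr_fun (iotaRetraction_iota k))
  · exact Function.RightInverse.surjective (g := piSection k)
      (LinearMap.congr_fun (piMap_piSection k))
  · refine le_antisymm (fun v hv => ?_) ?_
    · have h := LinearMap.congr_fun (iota_iotaRetraction_add k) v
      rw [LinearMap.mem_ker] at hv
      exact ⟨iotaRetraction k v, by simpa [hv] using h⟩
    · exact LinearMap.range_le_ker_iff.2 (piMap_iota k)

end
end

section
/- Let A be a commutative ring and I ⊆ A an ideal such that A is I-adically complete. Then every idempotent element ē of the quotient ring A/I lifts to an idempotent element e of A (i.e., e² = e and e mod I = ē). -/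
/-!
Idempotents are the roots of the monic polynomial `X ^ 2 - X`. Its derivative `2 X - 1` takes a unit
value at any idempotent, since `(2 e - 1) ^ 2 = 4 (e ^ 2 - e) + 1 = 1`. Hence every idempotent of
`A ⧸ I` is a simple root, and Hensel's lemma (`IsAdicComplete.henselianRing`) lifts it to `A`.
-/

/-- **Statement 13.** If `A` is `I`-adically complete, every idempotent of `A/I` lifts to
an idempotent of `A`. -/
theorem isIdempotentElem_lift_of_isAdicComplete
    (A : Type*) [CommRing A] (I : Ideal A) [IsAdicComplete I A]
    (ebar : A ⧸ I) (h : IsIdempotentElem ebar) :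
    ∃ e : A, IsIdempotentElem e ∧ Ideal.Quotient.mk I e = ebar := by
  obtain ⟨a₀, rfl⟩ := Ideal.Quotient.mk_surjective ebar
  have h' : Ideal.Quotient.mk I a₀ * Ideal.Quotient.mk I a₀ = Ideal.Quotient.mk I a₀ := h
  have monic : (Polynomial.X ^ 2 - Polynomial.X : Polynomial A).Monic :=
    Polynomial.monic_X_pow_sub (Polynomial.degree_X_le.trans_lt (by norm_num))
  obtain ⟨e, he, hmem⟩ := HenselianRing.is_henselian (I := I) _ monic a₀
    (by
      rw [← Ideal.Quotient.eq_zero_iff_mem]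
      simp [pow_two, h'])
    (by
      refine IsUnit.of_mul_eq_one (2 * Ideal.Quotient.mk I a₀ - 1) ?_
      simp
      linear_combination 4 * h')
  refine ⟨e, ?_, Ideal.Quotient.eq.mpr hmem⟩
  have he' : e ^ 2 - e = 0 := by simpa using he
  rw [IsIdempotentElem]
  linear_combination he'
end
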